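/- (First step in the proof of Theorem 2.7.) There exists a smooth symmetric (0,2)-tensor field σ on ℝ³, not identically zero, compactly supported in the intersection of the annulus A₁ with the open first octant {x ∈ ℝ³ : x₁ > 0, x₂ > 0, x₃ > 0}, which is trace-free (Σ_i σ_{ii}(x) = 0 for all x) and divergence-free (Σ_i ∂_i σ_{ij} = 0 everywhere for j = 1,2,3). Consequently, for this σ one has ∫_{A₁} x₁ Σ_{i,j,k} ((∂_k σ_{ij})(x))² dx > 0. -/

import Mathlib

/-!
In Fourier variables, a trace-free divergence-free symmetric tensor obtained from a scalar `φ` by a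
constant-coefficient operator is a symmetric matrix `P(ξ)` of polynomials with `P(ξ) ξ = 0` and
`tr P(ξ) = 0`. With `A = e₃ × ξ` and `B = ξ × A`, the vectors `ξ, A, B` are pairwise orthogonal, so
`P = A ⊗ B + B ⊗ A` qualifies. Replacing `ξ` by `∂` gives a third-order operator (`ttTensor`), which
does not enlarge supports; it is applied to a bump function `φ` supported near `(1, 1, 1)`.

A compactly supported function with one vanishing partial derivative is zero
(`eq_zero_of_pd_eq_zero`). Since `P₁₁ = 2 ∂₁∂₂∂₃`, three applications show that the tensor is
nonzero, and one more shows that its gradient is nonzero. The gradient is supported in `{x₁ > 0}`,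
so the weighted integral is that of a continuous nonnegative function that is somewhere nonzero.
-/

open MeasureTheory

/-- The `i`-th coordinate partial derivative of a function on `ℝ³`. -/
noncomputable def pd (i : Fin 3) (f : (Fin 3 → ℝ) → ℝ) (x : Fin 3 → ℝ) : ℝ :=
  fderiv ℝ f x (Pi.single i 1)

/-- The annulus `A₁ = {x : 1 < |x| < 2}` (Euclidean norm). -/
def annulusA₁ : Set (Fin 3 → ℝ) :=
  {x | 1 < Real.sqrt (∑ i, x i ^ 2) ∧ Real.sqrt (∑ i, x i ^ 2) < 2}

/-- The open first octant in `ℝ³`. -/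
def firstOctant : Set (Fin 3 → ℝ) := {x | 0 < x 0 ∧ 0 < x 1 ∧ 0 < x 2}

lemma contDiff_pd {f : (Fin 3 → ℝ) → ℝ} (hf : ContDiff ℝ (⊤ : ℕ∞) f) (i : Fin 3) :
    ContDiff ℝ (⊤ : ℕ∞) (pd i f) := by
  have h : ContDiff ℝ (⊤ : ℕ∞) (fderiv ℝ f) := hf.fderiv_right (by simp)
  exact h.clm_apply contDiff_const

lemma pd_comm {f : (Fin 3 → ℝ) → ℝ} (hf : ContDiff ℝ (⊤ : ℕ∞) f) (i j : Fin 3) :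
    pd i (pd j f) = pd j (pd i f) := by
  funext x
  have h : ContDiff ℝ (⊤ : ℕ∞) (fderiv ℝ f) := hf.fderiv_right (by simp)
  have hd : DifferentiableAt ℝ (fderiv ℝ f) x := (h.differentiable (by simp)) x
  have key : ∀ a b : Fin 3, pd a (pd b f) x
      = fderiv ℝ (fderiv ℝ f) x (Pi.single a 1) (Pi.single b 1) := by
    intro a b
    unfold pd
    rw [fderiv_clm_apply hd (differentiableAt_const _)]
    simp
  rw [key, key]
  have hs : IsSymmSndFDerivAt ℝ f x := hf.contDiffAt.isSymmSndFDerivAt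
    (by simpa using WithTop.coe_le_coe.2 (le_top : (2 : ℕ∞) ≤ ⊤))
  exact hs _ _

lemma pd_add {f g : (Fin 3 → ℝ) → ℝ} (hf : ContDiff ℝ (⊤ : ℕ∞) f)
    (hg : ContDiff ℝ (⊤ : ℕ∞) g) (i : Fin 3) (x : Fin 3 → ℝ) :
    pd i (fun y => f y + g y) x = pd i f x + pd i g x := by
  unfold pd
  rw [fderiv_fun_add (hf.differentiable (by simp) x) (hg.differentiable (by simp) x)]
  rfl

lemma pd_sub {f g : (Fin 3 → ℝ) → ℝ} (hf : ContDiff ℝ (⊤ : ℕ∞) f)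
    (hg : ContDiff ℝ (⊤ : ℕ∞) g) (i : Fin 3) (x : Fin 3 → ℝ) :
    pd i (fun y => f y - g y) x = pd i f x - pd i g x := by
  unfold pd
  rw [fderiv_fun_sub (hf.differentiable (by simp) x) (hg.differentiable (by simp) x)]
  rfl

lemma pd_const_mul {f : (Fin 3 → ℝ) → ℝ} (hf : ContDiff ℝ (⊤ : ℕ∞) f) (c : ℝ)
    (i : Fin 3) (x : Fin 3 → ℝ) :
    pd i (fun y => c * f y) x = c * pd i f x := by
  unfold pd
  rw [fderiv_const_mul (hf.differentiable (by simp) x)]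
  rfl

lemma pd_zero (i : Fin 3) (x : Fin 3 → ℝ) : pd i (fun _ => 0) x = 0 := by
  simp [pd]

lemma tsupport_pd_subset (f : (Fin 3 → ℝ) → ℝ) (i : Fin 3) :
    tsupport (pd i f) ⊆ tsupport f := by
  refine closure_minimal (fun x hx => ?_) (isClosed_tsupport f)
  by_contra hxf
  apply hx
  have h : fderiv ℝ f x = 0 :=
    image_eq_zero_of_notMem_tsupport fun h => hxf (tsupport_fderiv_subset ℝ h)
  simp [pd, h]

lemma hasCompactSupport_pd {f : (Fin 3 → ℝ) → ℝ} (hc : HasCompactSupport f) (i : Fin 3) :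
    HasCompactSupport (pd i f) :=
  hc.of_isClosed_subset (isClosed_tsupport _) (tsupport_pd_subset f i)

/-- A compactly supported function is constant along lines in direction `i` if its `i`-th partial
derivative vanishes, and every such line leaves the support. -/
lemma eq_zero_of_pd_eq_zero {f : (Fin 3 → ℝ) → ℝ} (hf : ContDiff ℝ (⊤ : ℕ∞) f)
    (hc : HasCompactSupport f) (i : Fin 3) (h : ∀ x, pd i f x = 0) (x : Fin 3 → ℝ) :
    f x = 0 := by
  set e : Fin 3 → ℝ := Pi.single i 1 with he
  have hd : ∀ t : ℝ, HasDerivAt (fun t : ℝ => f (x + t • e)) 0 t := by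
    intro t
    have h1 : HasFDerivAt f (fderiv ℝ f (x + t • e)) (x + t • e) :=
      (hf.differentiable (by simp) _).hasFDerivAt
    have h2 : HasDerivAt (fun t : ℝ => x + t • e) e t := by
      simpa using ((hasDerivAt_id t).smul_const e).const_add x
    have h3 := h1.comp_hasDerivAt t h2
    have h4 : fderiv ℝ f (x + t • e) e = 0 := h (x + t • e)
    rwa [h4] at h3
  obtain ⟨R, hR⟩ := hc.isCompact.isBounded.subset_closedBall 0
  have hconst := is_const_of_deriv_eq_zero (fun t => (hd t).differentiableAt)
    (fun t => (hd t).deriv) 0 (|R| + ‖x‖ + 1)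
  have hout : x + (|R| + ‖x‖ + 1) • e ∉ tsupport f := by
    intro hmem
    have h1 := hR hmem
    rw [mem_closedBall_zero_iff] at h1
    have h2 := norm_sub_le (x + (|R| + ‖x‖ + 1) • e) x
    have h3 : ‖(|R| + ‖x‖ + 1) • e‖ = |R| + ‖x‖ + 1 := by
      rw [norm_smul, he, Pi.norm_single, norm_one, mul_one, Real.norm_of_nonneg (by positivity)]
    rw [add_sub_cancel_left, h3] at h2
    linarith [le_abs_self R]
  simpa [image_eq_zero_of_notMem_tsupport hout] using hconst

/-- The tensor `A ⊗ B + B ⊗ A` with `A = e₃ × ξ`, `B = ξ × A` and `ξ = ∂`, applied to `φ`; partial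
derivatives are written with increasing indices from the outside in. -/
noncomputable def ttTensor (φ : (Fin 3 → ℝ) → ℝ) (x : Fin 3 → ℝ) : Matrix (Fin 3) (Fin 3) ℝ :=
  let F : Fin 3 → Fin 3 → Fin 3 → ℝ := fun i j k => pd i (pd j (pd k φ)) x
  !![2 * F 0 1 2, F 1 1 2 - F 0 0 2, (-1) * (F 0 0 1 + F 1 1 1);
     F 1 1 2 - F 0 0 2, (-2) * F 0 1 2, F 0 0 0 + F 0 1 1;
     (-1) * (F 0 0 1 + F 1 1 1), F 0 0 0 + F 0 1 1, 0]

lemma ttTensor_contDiff {φ : (Fin 3 → ℝ) → ℝ} (hφ : ContDiff ℝ (⊤ : ℕ∞) φ) (i j : Fin 3) :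
    ContDiff ℝ (⊤ : ℕ∞) fun x => ttTensor φ x i j := by
  have h : ∀ i j k, ContDiff ℝ (⊤ : ℕ∞) (pd i (pd j (pd k φ))) := fun i j k =>
    contDiff_pd (contDiff_pd (contDiff_pd hφ k) j) i
  fin_cases i <;> fin_cases j <;> simp only [ttTensor]
  · exact contDiff_const.mul (h 0 1 2)
  · exact (h 1 1 2).sub (h 0 0 2)
  · exact contDiff_const.mul ((h 0 0 1).add (h 1 1 1))
  · exact (h 1 1 2).sub (h 0 0 2)
  · exact contDiff_const.mul (h 0 1 2)
  · exact (h 0 0 0).add (h 0 1 1)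
  · exact contDiff_const.mul ((h 0 0 1).add (h 1 1 1))
  · exact (h 0 0 0).add (h 0 1 1)
  · exact contDiff_const

lemma ttTensor_eq_zero {φ : (Fin 3 → ℝ) → ℝ} {x : Fin 3 → ℝ} (hx : x ∉ tsupport φ) :
    ttTensor φ x = 0 := by
  have h : ∀ i j k, pd i (pd j (pd k φ)) x = 0 := fun i j k =>
    image_eq_zero_of_notMem_tsupport fun hm =>
      hx (tsupport_pd_subset _ _ (tsupport_pd_subset _ _ (tsupport_pd_subset _ _ hm)))
  ext i j
  fin_cases i <;> fin_cases j <;> simp [ttTensor, h]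

lemma ttTensor_div {φ : (Fin 3 → ℝ) → ℝ} (hφ : ContDiff ℝ (⊤ : ℕ∞) φ) (j : Fin 3)
    (x : Fin 3 → ℝ) : ∑ i, pd i (fun y => ttTensor φ y i j) x = 0 := by
  have h : ∀ i j k, ContDiff ℝ (⊤ : ℕ∞) (pd i (pd j (pd k φ))) := fun i j k =>
    contDiff_pd (contDiff_pd (contDiff_pd hφ k) j) i
  have h2 : ∀ j k, ContDiff ℝ (⊤ : ℕ∞) (pd j (pd k φ)) := fun j k =>
    contDiff_pd (contDiff_pd hφ k) j
  have h10 : pd 1 (pd 0 φ) = pd 0 (pd 1 φ) := pd_comm hφ 1 0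
  have h10_a : ∀ k, pd 1 (pd 0 (pd k φ)) = pd 0 (pd 1 (pd k φ)) := fun k =>
    pd_comm (contDiff_pd hφ k) 1 0
  have h10_b : ∀ j k, pd 1 (pd 0 (pd j (pd k φ))) = pd 0 (pd 1 (pd j (pd k φ))) :=
    fun j k => pd_comm (h2 j k) 1 0
  have h20 : pd 2 (pd 0 φ) = pd 0 (pd 2 φ) := pd_comm hφ 2 0
  have h20_a : ∀ k, pd 2 (pd 0 (pd k φ)) = pd 0 (pd 2 (pd k φ)) := fun k =>
    pd_comm (contDiff_pd hφ k) 2 0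
  have h20_b : ∀ j k, pd 2 (pd 0 (pd j (pd k φ))) = pd 0 (pd 2 (pd j (pd k φ))) :=
    fun j k => pd_comm (h2 j k) 2 0
  have h21 : pd 2 (pd 1 φ) = pd 1 (pd 2 φ) := pd_comm hφ 2 1
  have h21_a : ∀ k, pd 2 (pd 1 (pd k φ)) = pd 1 (pd 2 (pd k φ)) := fun k =>
    pd_comm (contDiff_pd hφ k) 2 1
  have h21_b : ∀ j k, pd 2 (pd 1 (pd j (pd k φ))) = pd 1 (pd 2 (pd j (pd k φ))) :=
    fun j k => pd_comm (h2 j k) 2 1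
  have hsum : ∑ i, pd i (fun y => ttTensor φ y i j) x = pd 0 (fun y => ttTensor φ y 0 j) x
      + pd 1 (fun y => ttTensor φ y 1 j) x + pd 2 (fun y => ttTensor φ y 2 j) x :=
    Fin.sum_univ_three _
  rw [hsum]
  fin_cases j
  all_goals
    simp [ttTensor, pd_add, pd_sub, pd_const_mul, pd_zero, h, ContDiff.add, -neg_mul, -mul_neg,
      -neg_add_rev, -one_mul]
    -- sort the fourth-order derivatives so that equal mixed partials become equal atoms
    simp only [h10, h10_a, h10_b, h20, h20_a, h20_b, h21, h21_a, h21_b]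
    ring

lemma gradient_integral_pos {σ : (Fin 3 → ℝ) → Matrix (Fin 3) (Fin 3) ℝ}
    {K : Set (Fin 3 → ℝ)} (hK : IsCompact K) (hKA : K ⊆ annulusA₁ ∩ firstOctant)
    (hσ : ∀ i j, ContDiff ℝ (⊤ : ℕ∞) fun x => σ x i j)
    (hsupp : ∀ i j, tsupport (fun x => σ x i j) ⊆ K) (hne : ¬ ∀ x, σ x = 0) :
    0 < ∫ x in annulusA₁, x 0 * ∑ i, ∑ j, ∑ k, (pd k (fun y => σ y i j) x) ^ 2 := by
  have hoff : ∀ x ∉ K, x 0 * ∑ i, ∑ j, ∑ k, (pd k (fun y => σ y i j) x) ^ 2 = 0 := by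
    intro x hx
    have : ∀ i j k, pd k (fun y => σ y i j) x = 0 := fun i j k =>
      image_eq_zero_of_notMem_tsupport fun hm => hx (hsupp i j (tsupport_pd_subset _ _ hm))
    simp [this]
  rw [setIntegral_eq_integral_of_forall_compl_eq_zero
    fun x hx => hoff x fun hxK => hx (hKA hxK).1]
  have hcont : Continuous fun x : Fin 3 → ℝ =>
      x 0 * ∑ i, ∑ j, ∑ k, (pd k (fun y => σ y i j) x) ^ 2 := by
    have : ∀ i j k, Continuous (pd k (fun y => σ y i j)) := fun i j k =>
      (contDiff_pd (hσ i j) k).continuous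
    fun_prop
  obtain ⟨a, b, x, hx⟩ : ∃ a b x, pd 0 (fun y => σ y a b) x ≠ 0 := by
    by_contra! hall
    refine hne fun x => ?_
    ext a b
    exact eq_zero_of_pd_eq_zero (hσ a b)
      (hK.of_isClosed_subset (isClosed_tsupport _) (hsupp a b)) 0 (hall a b) x
  have hxK : x ∈ K := by
    by_contra h
    exact h (hsupp a b (tsupport_pd_subset _ 0 (subset_tsupport _ hx)))
  refine hcont.integral_pos_of_hasCompactSupport_nonneg_nonzero
    (HasCompactSupport.intro hK hoff) (fun y => ?_) (x := x) ?_
  · by_cases hy : y ∈ K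
    · exact mul_nonneg (hKA hy).2.1.le (by positivity)
    · exact (hoff y hy).ge
  · refine mul_ne_zero (hKA hxK).2.1.ne' fun h0 => hx ?_
    rw [Finset.sum_eq_zero_iff_of_nonneg (fun _ _ => by positivity)] at h0
    have h1 := h0 a (Finset.mem_univ _)
    rw [Finset.sum_eq_zero_iff_of_nonneg (fun _ _ => by positivity)] at h1
    have h2 := h1 b (Finset.mem_univ _)
    rw [Finset.sum_eq_zero_iff_of_nonneg (fun _ _ => by positivity)] at h2
    exact pow_eq_zero_iff (two_ne_zero) |>.1 (h2 0 (Finset.mem_univ _))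

theorem tracefree_divfree_tensor_supported_in_first_octant :
    ∃ σ : (Fin 3 → ℝ) → Matrix (Fin 3) (Fin 3) ℝ,
      (∀ i j, ContDiff ℝ (⊤ : ℕ∞) fun x => σ x i j) ∧
      (∀ x, (σ x).IsSymm) ∧
      -- not identically zero
      (¬ ∀ x, σ x = 0) ∧
      -- compactly supported in `A₁ ∩ {x₁ > 0, x₂ > 0, x₃ > 0}`
      (∀ i j, tsupport (fun x => σ x i j) ⊆ annulusA₁ ∩ firstOctant) ∧
      -- trace-free
      (∀ x, ∑ i, σ x i i = 0) ∧
      -- divergence-free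
      (∀ j x, ∑ i, pd i (fun y => σ y i j) x = 0) ∧
      -- consequently the first center-of-mass moment is positive
      0 < ∫ x in annulusA₁,
          x 0 * ∑ i, ∑ j, ∑ k, (pd k (fun y => σ y i j) x) ^ 2 := by
  have hopen : IsOpen (annulusA₁ ∩ firstOctant) := by
    have hs : Continuous fun x : Fin 3 → ℝ => Real.sqrt (∑ i, x i ^ 2) := by fun_prop
    refine ((isOpen_lt continuous_const hs).inter (isOpen_lt hs continuous_const)).inter ?_
    exact (isOpen_lt continuous_const (continuous_apply 0)).inter
      ((isOpen_lt continuous_const (continuous_apply 1)).inter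
        (isOpen_lt continuous_const (continuous_apply 2)))
  -- the point `(1, 1, 1)` has norm `√3`
  have hmem : (fun _ => 1 : Fin 3 → ℝ) ∈ annulusA₁ ∩ firstOctant := by
    refine ⟨⟨?_, ?_⟩, by simp [firstOctant]⟩
    · rw [Real.lt_sqrt (by norm_num)]; norm_num
    · rw [Real.sqrt_lt' (by norm_num)]; norm_num
  obtain ⟨φ, hφsub, hφc, hφ, -, hφ1⟩ :=
    exists_contDiff_tsupport_subset (n := (⊤ : ℕ∞)) (hopen.mem_nhds hmem)
  have hsupp : ∀ i j, tsupport (fun x => ttTensor φ x i j) ⊆ tsupport φ := by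
    refine fun i j => closure_minimal (fun x hx => ?_) (isClosed_tsupport φ)
    by_contra hn
    exact hx (by simp [ttTensor_eq_zero hn])
  have hne : ¬ ∀ x, ttTensor φ x = 0 := by
    intro h
    have h0 : ∀ x, pd 0 (pd 1 (pd 2 φ)) x = 0 := fun x => by
      simpa [ttTensor] using congrFun (congrFun (h x) 0) 0
    have c2 := hasCompactSupport_pd hφc 2
    have c1 := hasCompactSupport_pd c2 1
    have s2 := contDiff_pd hφ 2
    have s1 := contDiff_pd s2 1
    have hz := eq_zero_of_pd_eq_zero hφ hφc 2
      (eq_zero_of_pd_eq_zero s2 c2 1 (eq_zero_of_pd_eq_zero s1 c1 0 h0)) (fun _ => 1)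
    exact one_ne_zero (hφ1.symm.trans hz)
  refine ⟨ttTensor φ, ttTensor_contDiff hφ, fun x => ?_, hne,
    fun i j => (hsupp i j).trans hφsub, fun x => ?_, ttTensor_div hφ,
    gradient_integral_pos hφc hφsub (ttTensor_contDiff hφ) hsupp hne⟩
  · ext i j
    fin_cases i <;> fin_cases j <;> rfl
  · simp [Fin.sum_univ_three, ttTensor]
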